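/- arXiv:2007.10924 — 2 statements merged into one kernel-verified Lean document; each statement's English description precedes it below -/
import Mathlib

section
/- Let n ≥ 1, let f : D → {0,1} be an n-bit partial Boolean function, and let β = (β_0, β_1, …, β_n) ∈ ℝ^{n+1} satisfy β_i ≥ 0 for all i, β_0 + β_1 + ⋯ + β_n = 1, and β_0 + Σ_{i=1}^{n} β_i·(−1)^{x_i ⊕ y_i} = 0 for every x ∈ D with f(x) = 0 and every y ∈ D with f(y) = 1. If k ∈ {1,…,n} and there exist X, X' ∈ D that differ exactly in the k-th coordinate and satisfy f(X) ≠ f(X'), then β_k = 1/2. -/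
open scoped BigOperators

noncomputable section

/-- The quantum oracle `O_x`, as a diagonal matrix acting on `ℂ^{(n+1)m}`, whose basis
vectors are indexed by pairs `(i, j)` with `i ∈ {0, 1, …, n}` (encoded as `Option (Fin n)`,
`none` playing the role of `0`) and `j ∈ {1, …, m}`. -/
def oracleMat (n m : ℕ) (x : Fin n → Bool) :
    Matrix (Option (Fin n) × Fin m) (Option (Fin n) × Fin m) ℂ :=
  Matrix.diagonal fun p =>
    match p.1 with
    | none => 1
    | some i => if x i then -1 else 1

/-- Squared Euclidean norm of a complex vector. -/
def vecNormSq {ι : Type*} [Fintype ι] (v : ι → ℂ) : ℝ :=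
  ∑ i, Complex.normSq (v i)

/-- The partial Boolean function `f` with domain (promised set) `D` is computed exactly by a
quantum 1-query algorithm: there are `m ≥ 1`, a unit vector `ψ`, unitaries `U₀, U₁` and an
orthogonal projection `P` with `‖P U₁ O_x U₀ ψ‖² = f x` for all `x ∈ D`. -/
def ComputedExactly1 {n : ℕ} (D : Set (Fin n → Bool)) (f : (Fin n → Bool) → Bool) : Prop :=
  ∃ m : ℕ, 1 ≤ m ∧
    ∃ ψ : Option (Fin n) × Fin m → ℂ, vecNormSq ψ = 1 ∧
      ∃ U₀ U₁ P : Matrix (Option (Fin n) × Fin m) (Option (Fin n) × Fin m) ℂ,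
        U₀ ∈ Matrix.unitaryGroup (Option (Fin n) × Fin m) ℂ ∧
        U₁ ∈ Matrix.unitaryGroup (Option (Fin n) × Fin m) ℂ ∧
        P.IsHermitian ∧ P * P = P ∧
        ∀ x ∈ D, vecNormSq ((P * U₁ * oracleMat n m x * U₀).mulVec ψ) = if f x then 1 else 0

/-- A multilinear polynomial: degree at most 1 in each variable. -/
def IsMultilinear {n : ℕ} (p : MvPolynomial (Fin n) ℝ) : Prop :=
  ∀ i, p.degreeOf i ≤ 1

/-- `p` represents the partial Boolean function `f` on the promised set `D`. -/
def Represents {n : ℕ} (p : MvPolynomial (Fin n) ℝ)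
    (D : Set (Fin n → Bool)) (f : (Fin n → Bool) → Bool) : Prop :=
  ∀ x ∈ D, MvPolynomial.eval (fun i => if x i then (1 : ℝ) else 0) p = if f x then 1 else 0

/-- `f` (with domain `D`) depends on `k` bits: `k` is the minimum, over all multilinear
polynomials representing `f`, of the number of variables occurring. -/
def DependsOnBits {n : ℕ} (D : Set (Fin n → Bool)) (f : (Fin n → Bool) → Bool) (k : ℕ) : Prop :=
  IsLeast {c | ∃ p : MvPolynomial (Fin n) ℝ,
    IsMultilinear p ∧ Represents p D f ∧ p.vars.card = c} k

/-- The Fourier basis vector `|F(x)⟩₁ = (1, (−1)^{x_1}, …, (−1)^{x_n})`. -/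
def fourierVec {n : ℕ} (x : Fin n → Bool) : Option (Fin n) → ℂ :=
  fun o => match o with
  | none => 1
  | some i => if x i then -1 else 1

/-- The polynomial basis vector `(1, x₁, …, xₙ)`. -/
def polyVec {n : ℕ} (x : Fin n → Bool) : Option (Fin n) → ℝ :=
  fun o => match o with
  | none => 1
  | some i => if x i then 1 else 0

/-- A degree-1 SOS complex representation matrix of `f` and its negation, given by the
rows `α l` (`l < p` for `f`, `p ≤ l < p + q` for the negation of `f`). -/
def SOSRep {n : ℕ} (D : Set (Fin n → Bool)) (f : (Fin n → Bool) → Bool)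
    (p q : ℕ) (α : Fin (p + q) → Option (Fin n) → ℂ) : Prop :=
  (∀ x ∈ D, ∑ l : Fin p,
      Complex.normSq (∑ i, (starRingEnd ℂ) (α (Fin.castAdd q l) i) * fourierVec x i)
      = if f x then 1 else 0) ∧
  (∀ x ∈ D, ∑ l : Fin q,
      Complex.normSq (∑ i, (starRingEnd ℂ) (α (Fin.natAdd p l) i) * fourierVec x i)
      = if f x then 0 else 1) ∧
  (∀ x : Fin n → Bool, ∑ l : Fin (p + q),
      Complex.normSq (∑ i, (starRingEnd ℂ) (α l i) * fourierVec x i) = 1)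

/-- `rank(G_f(1,b))`: the dimension of the real span of the vectors `(1, x₁, …, xₙ)`
over all `x ∈ D` with `f x = b`. -/
def rankG {n : ℕ} (D : Set (Fin n → Bool)) (f : (Fin n → Bool) → Bool) (b : Bool) : ℕ :=
  Module.finrank ℝ (Submodule.span ℝ (polyVec '' {x ∈ D | f x = b}))

end

/-- The weighted sum `β₀ + ∑ᵢ ±βᵢ` with sign `+` exactly at the coordinates where `x` and `y` agree;
the weight `β₀` is stored as `β none`. For Boolean words the signs are `(−1)^{xᵢ ⊕ yᵢ}`, so this is
the `β`-weighted inner product of the Fourier vectors of `x` and `y`. -/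
def weightedCorrelation {ι α R : Type*} [Fintype ι] [DecidableEq α] [Ring R]
    (β : Option ι → R) (x y : ι → α) : R :=
  β none + ∑ i, β (some i) * (if x i = y i then 1 else -1)

section WeightedCorrelation

variable {ι α R : Type*} [Fintype ι] [DecidableEq α] [Ring R]

theorem weightedCorrelation_comm (β : Option ι → R) (x y : ι → α) :
    weightedCorrelation β x y = weightedCorrelation β y x := by
  simp only [weightedCorrelation, eq_comm]

theorem weightedCorrelation_update_of_ne [DecidableEq ι] (β : Option ι → R) (x : ι → α) {k : ι}
    {a : α} (ha : a ≠ x k) :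
    weightedCorrelation β x (Function.update x k a) = ∑ i, β i - 2 * β (some k) := by
  have sign_term (i : ι) : β (some i) * (if x i = Function.update x k a i then 1 else -1) =
      β (some i) - if i = k then 2 * β (some k) else 0 := by
    obtain rfl | hik := eq_or_ne i k
    · simp [ha.symm, two_mul]
    · simp [hik]
  simp only [weightedCorrelation, sign_term, Finset.sum_sub_distrib, Fintype.sum_ite_eq',
    Fintype.sum_option, add_sub_assoc]

end WeightedCorrelation

theorem stmt_2_general {ι α K : Type*} [Fintype ι] [DecidableEq ι] [DecidableEq α]
    [DivisionRing K] [NeZero (2 : K)] {D : Set (ι → α)} {f : (ι → α) → Bool} {β : Option ι → K}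
    (hβsum : ∑ i, β i = 1)
    (hβorth : ∀ x ∈ D, f x = false → ∀ y ∈ D, f y = true → weightedCorrelation β x y = 0)
    {k : ι} {X : ι → α} {a : α} (ha : a ≠ X k) (hX : X ∈ D) (hX' : Function.update X k a ∈ D)
    (hne : f X ≠ f (Function.update X k a)) :
    β (some k) = 1 / 2 := by
  have orthogonal : weightedCorrelation β X (Function.update X k a) = 0 := by
    cases hfX : f X with
    | false => exact hβorth X hX hfX _ hX' (by simpa [hfX] using hne.symm)
    | true =>
      rw [weightedCorrelation_comm]
      exact hβorth _ hX' (by simpa [hfX] using hne.symm) X hX hfX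
  rw [weightedCorrelation_update_of_ne β X ha, hβsum, sub_eq_zero] at orthogonal
  exact eq_one_div_of_mul_eq_one_right orthogonal.symm

theorem stmt_2 (n : ℕ) (hn : 1 ≤ n) (D : Set (Fin n → Bool)) (f : (Fin n → Bool) → Bool)
    (β : Option (Fin n) → ℝ) (hβnn : ∀ i, 0 ≤ β i) (hβsum : (∑ i, β i) = 1)
    (hβorth : ∀ x ∈ D, f x = false → ∀ y ∈ D, f y = true →
      β none + ∑ i : Fin n, β (some i) * (if x i = y i then 1 else -1) = 0)
    (k : Fin n) (X : Fin n → Bool) (hX : X ∈ D)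
    (hX' : Function.update X k (!(X k)) ∈ D)
    (hne : f X ≠ f (Function.update X k (!(X k)))) :
    β (some k) = 1 / 2 :=
  stmt_2_general hβsum hβorth (Bool.not_ne_self _) hX hX' hne
end

section
/- For all n ≥ 3 and 2 ≤ k ≤ n, the number of n-bit partial Boolean functions that depend on k bits and can be computed exactly by a quantum 1-query algorithm is at most n²·2^{2^{n−1}(1+2^{2−k}) + 2n²}. Here n-bit partial Boolean functions are identified with maps F : {0,1}^n → {0,1,*}, the domain D of the partial Boolean function being the set of inputs not mapped to *. -/
open scoped BigOperators

/-!
The final states of a 1-query algorithm on inputs `x` and `y` have inner product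
`∑ o, p o * F(x) o * F(y) o`, where `F(x)` is the Fourier vector of `x` and `p o` is the weight with
which the index `o` is queried. Accepted and rejected inputs have orthogonal final states, so their
Fourier vectors span subspaces of `ℂ ^ (n + 1)`, of dimensions `a` and `b`, that are orthogonal for
the diagonal form with weights `p`. The function is determined by the bits `i` with `p i ≠ 0`, so
this form has rank at least `k`, whence `a + b ≤ 2 * (n + 1) - k`; and `a, b ≤ n`, because a Fourier
vector is never isotropic. A subspace of dimension `d` contains at most `2 ^ (d - 1)` Fourier
vectors, as `d` coordinates determine its elements and the first coordinate is normalised. So once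
the two subspaces are fixed, each by an `n`-tuple of inputs, at most
`2 ^ (n - 1) + 2 ^ (n + 1 - k)` binary choices (is this input accepted, is that one rejected)
remain.
-/

section LinearAlgebra

open Finset Module Submodule
open scoped Pointwise

variable {K : Type*}

lemma exists_span_image_range_fin_eq {E α : Type*} [DivisionRing K] [AddCommGroup E] [Module K E]
    [FiniteDimensional K E] (v : α → E) {S : Set α} (hS : S.Nonempty) {n : ℕ}
    (hn : finrank K (span K (v '' S)) ≤ n) :
    ∃ t : Fin n → α, span K (v '' Set.range t) = span K (v '' S) := by
  obtain ⟨f, hf, hspan, -⟩ := exists_fun_fin_finrank_span_eq K (v '' S)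
  choose g hgS hgf using hf
  obtain ⟨x₀, hx₀⟩ := hS
  refine ⟨Function.extend (Fin.castLE hn) g fun _ ↦ x₀, le_antisymm (span_mono ?_) ?_⟩
  · refine Set.image_mono ((Set.range_extend_subset _ _ _).trans ?_)
    rintro _ (⟨i, rfl⟩ | ⟨i, -, rfl⟩)
    exacts [hgS i, hx₀]
  · refine hspan.ge.trans (span_mono ?_)
    rintro _ ⟨i, rfl⟩
    exact ⟨g i, ⟨Fin.castLE hn i, (Fin.castLE_injective hn).extend_apply g _ i⟩, hgf i⟩

variable [Field K] {ι : Type*}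

lemma exists_finset_separating_coordinates (W : Submodule K (ι → K)) [FiniteDimensional K W] :
    ∃ J : Finset ι, #J = finrank K W ∧ ∀ w ∈ W, (∀ j ∈ J, w j = 0) → w = 0 := by
  classical
  let coord (i : ι) : Dual K W := LinearMap.proj i ∘ₗ W.subtype
  obtain ⟨b, -, -, hspan, hindep⟩ :=
    exists_linearIndepOn_extension (linearIndepOn_empty K coord) (Set.empty_subset Set.univ)
  have hsep : ∀ w ∈ W, (∀ j ∈ b, w j = 0) → w = 0 := by
    intro w hw hb
    have hle : span K (coord '' b) ≤ LinearMap.ker (Dual.eval K W ⟨w, hw⟩) :=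
      span_le.2 <| Set.forall_mem_image.2 hb
    exact funext fun i ↦ hle (hspan ⟨i, Set.mem_univ i, rfl⟩)
  have : Fintype b := @Fintype.ofFinite b hindep.linearIndependent.finite
  refine ⟨b.toFinset, le_antisymm ?_ ?_, by simpa only [Set.mem_toFinset] using hsep⟩
  · rw [Set.toFinset_card, ← Subspace.dual_finrank_eq]
    exact LinearIndependent.fintype_card_le_finrank hindep
  · have hinj : Function.Injective (LinearMap.funLeft K K ((↑) : b → ι) ∘ₗ W.subtype) :=
      (injective_iff_map_eq_zero _).2 fun w hw ↦
        Subtype.ext (hsep w w.2 fun j hj ↦ congrFun hw ⟨j, hj⟩)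
    simpa only [finrank_fintype_fun_eq_card, Set.toFinset_card] using
      LinearMap.finrank_le_finrank_of_injective hinj

lemma card_le_card_pow_finrank (W : Submodule K (ι → K)) [FiniteDimensional K W]
    (A : Finset K) (S : Finset (ι → K)) (hSW : ∀ v ∈ S, v ∈ W) (hSA : ∀ v ∈ S, ∀ i, v i ∈ A) :
    #S ≤ #A ^ finrank K W := by
  classical
  obtain ⟨J, hJ, hsep⟩ := exists_finset_separating_coordinates W
  suffices #S ≤ #(Fintype.piFinset fun _ : J ↦ A) by simpa [hJ] using this
  refine card_le_card_of_injOn (fun v ↦ J.restrict v) (fun v hv ↦ ?_) fun v hv w hw hvw ↦ ?_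
  · exact Fintype.mem_piFinset.2 fun j ↦ hSA v hv j
  · refine sub_eq_zero.1 (hsep _ (W.sub_mem (hSW v hv) (hSW w hw)) fun j hj ↦ ?_)
    exact sub_eq_zero.2 (congrFun hvw ⟨j, hj⟩)

/- Normalising one coordinate leaves at most half of the sign vectors of `W`: the opposites of the
vectors in `S` are sign vectors of `W` outside `S`. -/
lemma two_mul_card_le_two_pow_finrank (h2 : (2 : K) ≠ 0) (W : Submodule K (ι → K))
    [FiniteDimensional K W] (S : Finset (ι → K)) (hSW : ∀ v ∈ S, v ∈ W)
    (hsign : ∀ v ∈ S, ∀ i, v i = 1 ∨ v i = -1) (i₀ : ι) (hi₀ : ∀ v ∈ S, v i₀ = 1) :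
    2 * #S ≤ 2 ^ finrank K W := by
  classical
  have hdisj : Disjoint S (-S) := disjoint_left.2 fun v hv hv' ↦ h2 <| by
    have h := hi₀ _ (mem_neg'.1 hv')
    rw [Pi.neg_apply, hi₀ v hv] at h
    linear_combination -h
  calc 2 * #S = #(S ∪ -S) := by rw [card_union_of_disjoint hdisj, card_neg, two_mul]
    _ ≤ #({1, -1} : Finset K) ^ finrank K W := by
      refine card_le_card_pow_finrank W _ _ (fun v hv ↦ ?_) fun v hv i ↦ ?_
      · rcases mem_union.1 hv with hv | hv
        exacts [hSW v hv, W.neg_mem_iff.1 (hSW _ (mem_neg'.1 hv))]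
      · rw [mem_insert, mem_singleton]
        rcases mem_union.1 hv with hv | hv
        · exact hsign v hv i
        · have h := hsign _ (mem_neg'.1 hv) i
          exact h.symm.imp (neg_injective ·) neg_eq_iff_eq_neg.1
    _ ≤ 2 ^ finrank K W := Nat.pow_le_pow_left card_le_two _

/-- The symmetric bilinear form `(v, w) ↦ ∑ i, p i * v i * w i` with weights `p`, for which the
Fourier vectors of accepted and rejected inputs are orthogonal. -/
noncomputable def weightedForm {R : Type*} [CommSemiring R] [Fintype ι] [DecidableEq ι]
    (p : ι → R) : LinearMap.BilinForm R (ι → R) :=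
  Matrix.toBilin' (Matrix.diagonal p)

section WeightedForm

variable [Fintype ι] [DecidableEq ι]

lemma weightedForm_apply {R : Type*} [CommSemiring R] (p v w : ι → R) :
    weightedForm p v w = ∑ i, p i * v i * w i := by
  simp only [weightedForm, Matrix.toBilin'_apply', dotProduct, Matrix.mulVec_diagonal]
  exact sum_congr rfl fun i _ ↦ by ring

lemma weightedForm_comm {R : Type*} [CommSemiring R] (p v w : ι → R) :
    weightedForm p v w = weightedForm p w v := by
  simp only [weightedForm_apply, mul_right_comm]

lemma finrank_ker_weightedForm_add [DecidableEq K] (p : ι → K) :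
    finrank K (LinearMap.ker (weightedForm p)) + #{i | p i ≠ 0} = Fintype.card ι := by
  have hker : LinearMap.ker (weightedForm p) = LinearMap.ker (Matrix.diagonal p).mulVecLin := by
    ext v
    have hsingle (i : ι) : weightedForm p v (Pi.single i 1) = p i * v i := by
      simp [weightedForm_apply, Pi.single_apply]
    rw [LinearMap.mem_ker, LinearMap.mem_ker, Matrix.mulVecLin_apply]
    refine ⟨fun h ↦ funext fun i ↦ ?_, fun h ↦ ?_⟩
    · rw [Matrix.mulVec_diagonal, ← hsingle, h, LinearMap.zero_apply, Pi.zero_apply]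
    · exact LinearMap.pi_ext' fun i ↦ LinearMap.ext_ring <| by
        simpa [hsingle, Matrix.mulVec_diagonal] using congrFun h i
  rw [hker, ← Fintype.card_subtype, ← Matrix.rank_diagonal, Matrix.rank, add_comm,
    LinearMap.finrank_range_add_finrank_ker, finrank_fintype_fun_eq_card]

end WeightedForm

section BilinForm

lemma span_le_orthogonal_span {R M : Type*} [CommSemiring R] [AddCommMonoid M] [Module R M]
    {B : LinearMap.BilinForm R M} {S T : Set M}
    (h : ∀ s ∈ S, ∀ t ∈ T, B s t = 0) : span R T ≤ B.orthogonal (span R S) := by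
  refine span_le.2 fun t ht s hs ↦ ?_
  have : span R S ≤ LinearMap.ker (B.flip t) := span_le.2 fun s hs ↦ h s hs t ht
  exact this hs

variable {V : Type*} [AddCommGroup V] [Module K V] {B : LinearMap.BilinForm K V}

lemma finrank_add_finrank_le_of_le_orthogonal [FiniteDimensional K V] {W₁ W₂ : Submodule K V}
    (h : W₂ ≤ B.orthogonal W₁) :
    finrank K W₁ + finrank K W₂ ≤ finrank K V + finrank K (LinearMap.ker B) := by
  calc finrank K W₁ + finrank K W₂ ≤ finrank K W₁ + finrank K (B.orthogonal W₁) := by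
        gcongr; exact finrank_mono h
    _ = finrank K V + finrank K (W₁ ⊓ LinearMap.ker B : Submodule K V) :=
      LinearMap.BilinForm.finrank_add_finrank_orthogonal' W₁
    _ ≤ finrank K V + finrank K (LinearMap.ker B) := by
        gcongr; exact finrank_mono inf_le_right

lemma finrank_span_lt_of_forall_apply_eq_zero [FiniteDimensional K V] {v : V} (hv : B v v ≠ 0)
    {T : Set V} (h : ∀ t ∈ T, B v t = 0) : finrank K (span K T) < finrank K V := by
  refine finrank_lt fun htop ↦ hv ?_
  have hle : span K T ≤ LinearMap.ker (B v) := span_le.2 h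
  exact hle (htop ▸ mem_top)

end BilinForm

end LinearAlgebra

lemma pow_add_pow_le_pow_add_pow {R : Type*} [CommSemiring R] [PartialOrder R]
    [IsStrictOrderedRing R] [ExistsAddOfLE R] {c : R} (hc : 1 ≤ c) {a b m n : ℕ}
    (ha : a ≤ n) (hb : b ≤ n) (hab : a + b ≤ m + n) : c ^ a + c ^ b ≤ c ^ m + c ^ n := by
  rcases le_total a m with ham | ham
  · exact add_le_add (pow_le_pow_right₀ hc ham) (pow_le_pow_right₀ hc hb)
  rcases le_total b m with hbm | hbm
  · rw [add_comm (c ^ a)]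
    exact add_le_add (pow_le_pow_right₀ hc hbm) (pow_le_pow_right₀ hc ha)
  obtain ⟨u, rfl⟩ := Nat.exists_eq_add_of_le ham
  calc c ^ (m + u) + c ^ b = c ^ m * c ^ u + c ^ b * 1 := by rw [pow_add, mul_one]
    _ ≤ c ^ m * 1 + c ^ b * c ^ u :=
      mul_add_mul_le_mul_add_mul (pow_le_pow_right₀ hc hbm) (one_le_pow₀ hc)
    _ ≤ c ^ m + c ^ n := by
      rw [mul_one, ← pow_add]
      exact add_le_add_right (pow_le_pow_right₀ hc (by omega)) _

section PartialFunctions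

open Finset

lemma ncard_setOf_forall_some_mem_le {α β : Type*} [Finite α] [Fintype β] (A : β → Finset α) :
    {F : α → Option β | ∀ x b, F x = some b → x ∈ A b}.ncard ≤ 2 ^ ∑ b, #(A b) := by
  classical
  cases nonempty_fintype α
  let fibers (F : α → Option β) (b : β) : Finset α := {x | F x = some b}
  have hfibers : Function.Injective fibers := fun F G h ↦ funext fun x ↦ Option.ext fun b ↦ by
    simpa [fibers] using Finset.ext_iff.1 (congrFun h b) x
  calc {F : α → Option β | ∀ x b, F x = some b → x ∈ A b}.ncard
      ≤ (Fintype.piFinset fun b ↦ (A b).powerset : Set (β → Finset α)).ncard := by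
        refine Set.ncard_le_ncard_of_injOn fibers (fun F hF ↦ ?_) hfibers.injOn (Set.toFinite _)
        exact mem_coe.2 <| Fintype.mem_piFinset.2 fun b ↦ mem_powerset.2 fun x hx ↦
          hF x b (by simpa [fibers] using hx)
    _ = 2 ^ ∑ b, #(A b) := by
      simp only [Set.ncard_coe_finset, Fintype.card_piFinset, card_powerset, prod_pow_eq_pow_sum]

lemma ncard_le_card_mul_two_pow {α β ι : Type*} [Finite α] [Fintype β] [Fintype ι]
    (A : ι → β → Finset α) (N : ℕ) (S : Set (α → Option β))
    (hS : ∀ F ∈ S, ∃ i, ∑ b, #(A i b) ≤ N ∧ ∀ x b, F x = some b → x ∈ A i b) :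
    S.ncard ≤ Fintype.card ι * 2 ^ N := by
  classical
  let captured (i : ι) : Set (α → Option β) :=
    {F | ∑ b, #(A i b) ≤ N ∧ ∀ x b, F x = some b → x ∈ A i b}
  have hcaptured (i : ι) : (captured i).ncard ≤ 2 ^ N := by
    by_cases hi : ∑ b, #(A i b) ≤ N
    · simp only [captured, hi, true_and]
      exact (ncard_setOf_forall_some_mem_le (A i)).trans (Nat.pow_le_pow_right two_pos hi)
    · simp [captured, hi]
  calc S.ncard ≤ (⋃ i, captured i).ncard :=
        Set.ncard_le_ncard (fun F hF ↦ Set.mem_iUnion.2 (hS F hF)) (Set.toFinite _)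
    _ ≤ ∑ i, (captured i).ncard := Set.ncard_iUnion_le_of_fintype _
    _ ≤ Fintype.card ι * 2 ^ N := by
      simpa using sum_le_card_nsmul univ _ _ fun i _ ↦ hcaptured i

end PartialFunctions

section MultilinearExtension

open Finset MvPolynomial

variable {σ R : Type*} [DecidableEq σ] [CommRing R]

/-- The multilinear extension of a function `g` of the subsets of `I`: the polynomial in the
variables of `I` whose value at the indicator of `T ⊆ I` is `g T`. It represents a partial function
that is determined by the bits in `I` using only the variables in `I`. -/
noncomputable def multilinearExtension (I : Finset σ) (g : Finset σ → R) : MvPolynomial σ R :=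
  ∑ T ∈ I.powerset, C (g T) * ∏ i ∈ I, if i ∈ T then X i else 1 - X i

lemma degreeOf_multilinearExtension_le (I : Finset σ) (g : Finset σ → R) (j : σ) :
    degreeOf j (multilinearExtension I g) ≤ if j ∈ I then 1 else 0 := by
  have hX (i : σ) : degreeOf j (X i : MvPolynomial σ R) ≤ if j = i then 1 else 0 := by
    cases subsingleton_or_nontrivial R
    · rw [Subsingleton.elim (X i : MvPolynomial σ R) 0, degreeOf_zero]
      exact Nat.zero_le _
    · rw [degreeOf_X]
  have hfactor (T : Finset σ) (i : σ) :
      degreeOf j (if i ∈ T then X i else 1 - X i : MvPolynomial σ R) ≤ if j = i then 1 else 0 := by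
    by_cases hi : i ∈ T
    · simpa only [hi, if_true] using hX i
    · simp only [hi, if_false]
      exact (degreeOf_sub_le _ _ _).trans (max_le (by simp only [degreeOf_one, zero_le]) (hX i))
  refine (degreeOf_sum_le _ _ _).trans (Finset.sup_le fun T _ ↦ ?_)
  calc degreeOf j (C (g T) * ∏ i ∈ I, if i ∈ T then X i else 1 - X i)
      ≤ ∑ i ∈ I, degreeOf j (if i ∈ T then X i else 1 - X i : MvPolynomial σ R) :=
        (degreeOf_C_mul_le _ _ _).trans (degreeOf_prod_le _ _ _)
    _ ≤ ∑ i ∈ I, if j = i then 1 else 0 := sum_le_sum fun i _ ↦ hfactor T i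
    _ = if j ∈ I then 1 else 0 := sum_ite_eq I j fun _ ↦ 1

lemma vars_multilinearExtension_subset (I : Finset σ) (g : Finset σ → R) :
    (multilinearExtension I g).vars ⊆ I := by
  intro j hj
  by_contra hjI
  have hdeg := degreeOf_multilinearExtension_le I g j
  rw [if_neg hjI, Nat.le_zero] at hdeg
  exact mem_vars_iff_degreeOf_ne_zero.1 hj hdeg

lemma eval_multilinearExtension (I : Finset σ) (g : Finset σ → R) (x : σ → Bool) :
    eval (fun i ↦ if x i then 1 else 0) (multilinearExtension I g) = g {i ∈ I | x i} := by
  have hfactor (T : Finset σ) (i : σ) :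
      eval (fun i ↦ if x i then 1 else 0) (if i ∈ T then X i else 1 - X i : MvPolynomial σ R) =
        if i ∈ T ↔ x i then 1 else 0 := by
    by_cases hi : i ∈ T <;> cases hx : x i <;> simp [hi, hx]
  have hagree (T : Finset σ) (hT : T ∈ I.powerset) :
      (∀ i ∈ I, (i ∈ T ↔ x i)) ↔ T = {i ∈ I | x i} := by
    rw [mem_powerset] at hT
    grind
  simp only [multilinearExtension, map_sum, map_mul, eval_C, map_prod, hfactor, prod_ite_zero,
    prod_const_one, mul_ite, mul_one, mul_zero]
  rw [sum_congr rfl fun T hT ↦ by rw [if_congr (hagree T hT) rfl rfl]]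
  simp

end MultilinearExtension

section DependsOnBits

open Finset

variable {n k : ℕ} {D : Set (Fin n → Bool)} {f : (Fin n → Bool) → Bool}

lemma DependsOnBits.le_card_of_determined (h : DependsOnBits D f k) (I : Finset (Fin n))
    (hI : ∀ x ∈ D, ∀ y ∈ D, (∀ i ∈ I, x i = y i) → f x = f y) : k ≤ #I := by
  classical
  let g (T : Finset (Fin n)) : ℝ :=
    if ∃ y ∈ D, f y ∧ ({i ∈ I | y i} : Finset (Fin n)) = T then 1 else 0
  have hrep : Represents (multilinearExtension I g) D f := by
    intro x hx
    rw [eval_multilinearExtension]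
    refine if_congr ⟨?_, fun hfx ↦ ⟨x, hx, hfx, rfl⟩⟩ rfl rfl
    rintro ⟨y, hy, hfy, hxy⟩
    rw [hI x hx y hy fun i hi ↦ ?_, hfy]
    have := Finset.ext_iff.1 hxy i
    grind
  have hmul : IsMultilinear (multilinearExtension I g) := fun j ↦
    (degreeOf_multilinearExtension_le I g j).trans (by split_ifs <;> simp)
  exact (h.2 ⟨_, hmul, hrep, rfl⟩).trans (card_le_card (vars_multilinearExtension_subset I g))

lemma DependsOnBits.le_length (h : DependsOnBits D f k) : k ≤ n := by
  simpa using h.le_card_of_determined univ fun x _ y _ hxy ↦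
    congrArg f (funext fun i ↦ hxy i (mem_univ i))

lemma DependsOnBits.exists_eq (h : DependsOnBits D f k) (hk : k ≠ 0) (b : Bool) :
    ∃ x ∈ D, f x = b := by
  by_contra! hb
  refine hk (Nat.le_zero.1 (h.le_card_of_determined ∅ fun x hx y hy _ ↦ ?_))
  rw [Bool.eq_not_of_ne (hb x hx), Bool.eq_not_of_ne (hb y hy)]

end DependsOnBits

section Matrix

open Matrix

variable {ι : Type*} [Fintype ι]

lemma ofReal_vecNormSq (v : ι → ℂ) : (vecNormSq v : ℂ) = star v ⬝ᵥ v := by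
  simp [vecNormSq, dotProduct, Complex.normSq_eq_conj_mul_self]

open scoped ComplexOrder in
lemma vecNormSq_eq_zero {v : ι → ℂ} : vecNormSq v = 0 ↔ v = 0 := by
  rw [← Complex.ofReal_eq_zero, ofReal_vecNormSq, dotProduct_star_self_eq_zero]

lemma star_mulVec_dotProduct {m n R : Type*} [Fintype m] [Fintype n] [NonUnitalSemiring R]
    [StarRing R] (M : Matrix m n R) (a : n → R) (b : m → R) :
    star (M *ᵥ a) ⬝ᵥ b = star a ⬝ᵥ (Mᴴ *ᵥ b) := by
  rw [star_mulVec, ← dotProduct_mulVec]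

lemma star_mulVec_dotProduct_mulVec_of_mem_unitaryGroup {R : Type*} [CommRing R] [StarRing R]
    [DecidableEq ι] {U : Matrix ι ι R} (hU : U ∈ unitaryGroup ι R) (a b : ι → R) :
    star (U *ᵥ a) ⬝ᵥ (U *ᵥ b) = star a ⬝ᵥ b := by
  rw [star_mulVec_dotProduct, mulVec_mulVec, ← star_eq_conjTranspose,
    mem_unitaryGroup_iff'.1 hU, one_mulVec]

variable {P : Matrix ι ι ℂ}

lemma mulVec_eq_self_of_vecNormSq_eq (hP : P.IsHermitian) (hPP : P * P = P) {v : ι → ℂ}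
    (hv : vecNormSq (P *ᵥ v) = vecNormSq v) : P *ᵥ v = v := by
  have hleft : star (P *ᵥ v) ⬝ᵥ v = star (P *ᵥ v) ⬝ᵥ (P *ᵥ v) := by
    rw [star_mulVec_dotProduct, star_mulVec_dotProduct, mulVec_mulVec, hP.eq, hPP]
  have hright : star v ⬝ᵥ (P *ᵥ v) = star (P *ᵥ v) ⬝ᵥ (P *ᵥ v) := by
    rw [← hleft, star_mulVec_dotProduct, hP.eq]
  refine (sub_eq_zero.1 (vecNormSq_eq_zero.1 (Complex.ofReal_eq_zero.1 ?_))).symm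
  rw [ofReal_vecNormSq, star_sub, sub_dotProduct, dotProduct_sub, dotProduct_sub, hleft, hright,
    ← ofReal_vecNormSq, ← ofReal_vecNormSq, hv]
  ring

lemma star_dotProduct_eq_zero_of_projection (hP : P.IsHermitian) (hPP : P * P = P) {v w : ι → ℂ}
    (hv : vecNormSq (P *ᵥ v) = 0) (hw : vecNormSq (P *ᵥ w) = vecNormSq w) : star v ⬝ᵥ w = 0 := by
  rw [← mulVec_eq_self_of_vecNormSq_eq hP hPP hw, ← hP.eq, ← star_mulVec_dotProduct,
    vecNormSq_eq_zero.1 hv, star_zero, zero_dotProduct]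

end Matrix

section FourierVec

open Finset Module Submodule Matrix

variable {n : ℕ}

lemma fourierVec_eq_one_or_eq_neg_one (x : Fin n → Bool) (o : Option (Fin n)) :
    fourierVec x o = 1 ∨ fourierVec x o = -1 := by
  rcases o with _ | i
  · exact .inl rfl
  · cases hx : x i <;> simp [fourierVec, hx]

lemma fourierVec_mul_self (x : Fin n → Bool) (o : Option (Fin n)) :
    fourierVec x o * fourierVec x o = 1 :=
  mul_self_eq_one_iff.2 (fourierVec_eq_one_or_eq_neg_one x o)

lemma star_fourierVec (x : Fin n → Bool) (o : Option (Fin n)) :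
    star (fourierVec x o) = fourierVec x o := by
  rcases fourierVec_eq_one_or_eq_neg_one x o with h | h <;> simp [h]

lemma fourierVec_injective : Function.Injective (fourierVec (n := n)) := by
  intro x y h
  funext i
  have hi : fourierVec x (some i) = fourierVec y (some i) := congrFun h (some i)
  cases hx : x i <;> cases hy : y i <;>
    first | rfl | norm_num [fourierVec, hx, hy] at hi

lemma weightedForm_fourierVec_self (p : Option (Fin n) → ℂ) (x : Fin n → Bool) :
    weightedForm p (fourierVec x) (fourierVec x) = ∑ o, p o := by
  simp only [weightedForm_apply, mul_assoc, fourierVec_mul_self, mul_one]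

/-- The span of the Fourier vectors of the inputs in `S`. -/
def fourierSpan (S : Set (Fin n → Bool)) : Submodule ℂ (Option (Fin n) → ℂ) :=
  span ℂ (fourierVec '' S)

open Classical in
/-- The inputs whose Fourier vectors are linear combinations of those of the inputs in `S`. -/
noncomputable def fourierClosure (S : Set (Fin n → Bool)) : Finset (Fin n → Bool) :=
  {x | fourierVec x ∈ fourierSpan S}

lemma mem_fourierClosure {S : Set (Fin n → Bool)} {x : Fin n → Bool} :
    x ∈ fourierClosure S ↔ fourierVec x ∈ fourierSpan S := by
  simp only [fourierClosure, mem_filter_univ]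

lemma mem_fourierClosure_of_mem {S : Set (Fin n → Bool)} {x : Fin n → Bool} (hx : x ∈ S) :
    x ∈ fourierClosure S :=
  mem_fourierClosure.2 (subset_span (Set.mem_image_of_mem fourierVec hx))

lemma two_mul_card_fourierClosure_le (S : Set (Fin n → Bool)) :
    2 * #(fourierClosure S) ≤ 2 ^ finrank ℂ (fourierSpan S) := by
  classical
  rw [← card_image_of_injective _ fourierVec_injective]
  refine two_mul_card_le_two_pow_finrank two_ne_zero _ _ ?_ ?_ none ?_
  · exact forall_mem_image.2 fun x hx ↦ mem_fourierClosure.1 hx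
  · exact forall_mem_image.2 fun x _ ↦ fourierVec_eq_one_or_eq_neg_one x
  · exact forall_mem_image.2 fun _ _ ↦ rfl

end FourierVec

section QueryWeight

open Finset Module Submodule Matrix

variable {n k : ℕ} {D : Set (Fin n → Bool)} {f : (Fin n → Bool) → Bool}
  {p : Option (Fin n) → ℂ}

/-- Weights for which inputs with different values of `f` have orthogonal Fourier vectors. A 1-query
algorithm supplies them: `p o` is the squared norm of the part of the queried state carrying the
query index `o`. The weights are complex so that the weighted form is defined on the space of the
vectors `fourierVec x`. -/
structure IsQueryWeight (p : Option (Fin n) → ℂ) (D : Set (Fin n → Bool))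
    (f : (Fin n → Bool) → Bool) : Prop where
  sum_eq_one : ∑ o, p o = 1
  weightedForm_eq_zero : ∀ x ∈ D, ∀ y ∈ D, f x ≠ f y →
    weightedForm p (fourierVec x) (fourierVec y) = 0

lemma star_oracleMat_mulVec_dotProduct {m : ℕ} (u : Option (Fin n) × Fin m → ℂ)
    (x y : Fin n → Bool) :
    star (oracleMat n m x *ᵥ u) ⬝ᵥ (oracleMat n m y *ᵥ u) =
      weightedForm (fun o ↦ (vecNormSq fun j ↦ u (o, j) : ℂ)) (fourierVec x) (fourierVec y) := by
  have horacle (z : Fin n → Bool) :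
      oracleMat n m z *ᵥ u = fun q ↦ fourierVec z q.1 * u q :=
    funext fun q ↦ mulVec_diagonal _ _ _
  simp only [horacle, weightedForm_apply, dotProduct, Pi.star_apply, star_mul', star_fourierVec,
    Fintype.sum_prod_type, ofReal_vecNormSq, sum_mul]
  exact sum_congr rfl fun o _ ↦ sum_congr rfl fun j _ ↦ by ring

lemma ComputedExactly1.exists_isQueryWeight (h : ComputedExactly1 D f) :
    ∃ p, IsQueryWeight p D f := by
  obtain ⟨m, -, ψ, hψ, U₀, U₁, P, hU₀, hU₁, hP, hPP, hf⟩ := h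
  let u := U₀ *ᵥ ψ
  let p (o : Option (Fin n)) : ℂ := vecNormSq fun j ↦ u (o, j)
  let final (x : Fin n → Bool) := U₁ *ᵥ oracleMat n m x *ᵥ u
  have hinner (x y : Fin n → Bool) :
      star (final x) ⬝ᵥ final y = weightedForm p (fourierVec x) (fourierVec y) := by
    rw [star_mulVec_dotProduct_mulVec_of_mem_unitaryGroup hU₁, star_oracleMat_mulVec_dotProduct]
  have hsum : ∑ o, p o = 1 := by
    calc ∑ o, p o = (vecNormSq u : ℂ) := by
          simp only [p, vecNormSq, Fintype.sum_prod_type, Complex.ofReal_sum]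
      _ = (vecNormSq ψ : ℂ) := by
          rw [ofReal_vecNormSq, star_mulVec_dotProduct_mulVec_of_mem_unitaryGroup hU₀,
            ofReal_vecNormSq]
      _ = 1 := by rw [hψ, Complex.ofReal_one]
  have hnorm (x : Fin n → Bool) : vecNormSq (final x) = 1 := by
    rw [← Complex.ofReal_eq_one, ofReal_vecNormSq, hinner, weightedForm_fourierVec_self, hsum]
  have haccept {x : Fin n → Bool} (hx : x ∈ D) :
      vecNormSq (P *ᵥ final x) = if f x then 1 else 0 := by
    rw [← hf x hx]
    simp only [final, u, mulVec_mulVec, Matrix.mul_assoc]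
  have horth {x y : Fin n → Bool} (hx : x ∈ D) (hy : y ∈ D) (hfx : f x = false)
      (hfy : f y = true) : weightedForm p (fourierVec x) (fourierVec y) = 0 := by
    rw [← hinner]
    refine star_dotProduct_eq_zero_of_projection hP hPP ?_ ?_
    · simp [haccept hx, hfx]
    · simp [haccept hy, hfy, hnorm]
  refine ⟨p, hsum, fun x hx y hy hxy ↦ ?_⟩
  rcases Bool.eq_false_or_eq_true (f x) with hfx | hfx
  · rw [weightedForm_comm]
    exact horth hy hx (by simpa [hfx] using hxy.symm) hfx
  · exact horth hx hy hfx (by simpa [hfx] using hxy.symm)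

lemma IsQueryWeight.eq_of_forall_mem_support (hp : IsQueryWeight p D f) {x y : Fin n → Bool}
    (hx : x ∈ D) (hy : y ∈ D) (hxy : ∀ i, p (some i) ≠ 0 → x i = y i) : f x = f y := by
  by_contra hf
  have hself : weightedForm p (fourierVec x) (fourierVec y) =
      weightedForm p (fourierVec x) (fourierVec x) := by
    simp only [weightedForm_apply]
    refine sum_congr rfl fun o _ ↦ ?_
    rcases o with _ | i
    · rfl
    · by_cases hi : p (some i) = 0
      · simp only [hi, zero_mul]
      · simp only [fourierVec, hxy i hi]
  rw [hp.weightedForm_eq_zero x hx y hy hf, weightedForm_fourierVec_self, hp.sum_eq_one] at hself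
  exact zero_ne_one hself

lemma IsQueryWeight.le_card_support (hp : IsQueryWeight p D f) (hk : DependsOnBits D f k) :
    k ≤ #{o | p o ≠ 0} := by
  classical
  calc k ≤ #{i | p (some i) ≠ 0} := hk.le_card_of_determined _ fun x hx y hy hxy ↦
        hp.eq_of_forall_mem_support hx hy fun i hi ↦ hxy i (by simpa using hi)
    _ ≤ #{o | p o ≠ 0} := card_le_card_of_injOn some (fun i hi ↦ by simpa using hi)
      (Option.some_injective _).injOn

lemma IsQueryWeight.finrank_fourierSpan_le (hp : IsQueryWeight p D f) {b : Bool}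
    (hb : ∃ y ∈ D, f y = !b) : finrank ℂ (fourierSpan {x ∈ D | f x = b}) ≤ n := by
  obtain ⟨y, hy, hfy⟩ := hb
  have hself : weightedForm p (fourierVec y) (fourierVec y) ≠ 0 := by
    rw [weightedForm_fourierVec_self, hp.sum_eq_one]
    exact one_ne_zero
  have hlt : finrank ℂ (fourierSpan {x ∈ D | f x = b}) < finrank ℂ (Option (Fin n) → ℂ) :=
    finrank_span_lt_of_forall_apply_eq_zero hself <| Set.forall_mem_image.2 fun x hx ↦
      hp.weightedForm_eq_zero y hy x hx.1 (by simp [hfy, hx.2])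
  simpa [Nat.lt_succ_iff] using hlt

lemma IsQueryWeight.finrank_fourierSpan_add_le (hp : IsQueryWeight p D f) :
    finrank ℂ (fourierSpan {x ∈ D | f x = false}) + finrank ℂ (fourierSpan {x ∈ D | f x = true}) +
      #{o | p o ≠ 0} ≤ 2 * (n + 1) := by
  have horth : fourierSpan {x ∈ D | f x = true} ≤
      (weightedForm p).orthogonal (fourierSpan {x ∈ D | f x = false}) :=
    span_le_orthogonal_span <| Set.forall_mem_image.2 fun x hx ↦ Set.forall_mem_image.2 fun y hy ↦
      hp.weightedForm_eq_zero x hx.1 y hy.1 (by simp [hx.2, hy.2])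
  have hdim := finrank_add_finrank_le_of_le_orthogonal horth
  have hker := finrank_ker_weightedForm_add p
  simp only [finrank_fintype_fun_eq_card, Fintype.card_option, Fintype.card_fin] at hdim hker
  omega

lemma IsQueryWeight.sum_card_fourierClosure_le (hp : IsQueryWeight p D f)
    (hd : DependsOnBits D f k) (hk : k ≠ 0) :
    ∑ b, #(fourierClosure {x ∈ D | f x = b}) ≤ 2 ^ (n - 1) + 2 ^ (n + 1 - k) := by
  have hkn := hd.le_length
  have hsupp := hp.le_card_support hd
  have hdim := hp.finrank_fourierSpan_add_le
  have hpow := pow_add_pow_le_pow_add_pow (one_le_two (α := ℕ)) (m := n + 2 - k)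
    (hp.finrank_fourierSpan_le (hd.exists_eq hk !false))
    (hp.finrank_fourierSpan_le (hd.exists_eq hk !true)) (by omega)
  have hfalse := two_mul_card_fourierClosure_le {x ∈ D | f x = false}
  have htrue := two_mul_card_fourierClosure_le {x ∈ D | f x = true}
  have hn : 2 ^ n = 2 * 2 ^ (n - 1) := by rw [← pow_succ']; congr 1; omega
  have hm : 2 ^ (n + 2 - k) = 2 * 2 ^ (n + 1 - k) := by rw [← pow_succ']; congr 1; omega
  rw [Fintype.sum_bool]
  omega

end QueryWeight

section Counting

open Finset Module

variable {n k : ℕ}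

lemma exists_tuples_capturing {F : (Fin n → Bool) → Option Bool} (hk : k ≠ 0)
    (hd : DependsOnBits {x | F x ≠ none} (fun x ↦ (F x).getD false) k)
    (hc : ComputedExactly1 {x | F x ≠ none} fun x ↦ (F x).getD false) :
    ∃ t : Bool → Fin n → Fin n → Bool,
      ∑ b, #(fourierClosure (Set.range (t b))) ≤ 2 ^ (n - 1) + 2 ^ (n + 1 - k) ∧
      ∀ x b, F x = some b → x ∈ fourierClosure (Set.range (t b)) := by
  obtain ⟨p, hp⟩ := hc.exists_isQueryWeight
  have htuple (b : Bool) : ∃ t : Fin n → Fin n → Bool,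
      fourierSpan (Set.range t) = fourierSpan {x ∈ {x | F x ≠ none} | (F x).getD false = b} :=
    exists_span_image_range_fin_eq fourierVec (hd.exists_eq hk b)
      (hp.finrank_fourierSpan_le (hd.exists_eq hk !b))
  choose t ht using htuple
  have hclosure (b : Bool) : fourierClosure (Set.range (t b)) =
      fourierClosure {x ∈ {x | F x ≠ none} | (F x).getD false = b} :=
    Finset.ext fun x ↦ by rw [mem_fourierClosure, mem_fourierClosure, ht]
  refine ⟨t, ?_, fun x b hx ↦ ?_⟩
  · simpa only [hclosure] using hp.sum_card_fourierClosure_le hd hk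
  · rw [hclosure]
    exact mem_fourierClosure_of_mem (by simp [hx])

lemma ncard_dependsOnBits_computedExactly1_le (hk : k ≠ 0) :
    {F : (Fin n → Bool) → Option Bool |
        DependsOnBits {x | F x ≠ none} (fun x ↦ (F x).getD false) k ∧
        ComputedExactly1 {x | F x ≠ none} fun x ↦ (F x).getD false}.ncard ≤
      2 ^ (2 ^ (n - 1) + 2 ^ (n + 1 - k) + 2 * n ^ 2) := by
  have hcard : Fintype.card (Bool → Fin n → Fin n → Bool) = 2 ^ (2 * n ^ 2) := by
    simp only [Fintype.card_fun, Fintype.card_bool, Fintype.card_fin, ← pow_mul]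
    ring
  refine (ncard_le_card_mul_two_pow
    (fun (t : Bool → Fin n → Fin n → Bool) b ↦ fourierClosure (Set.range (t b)))
    (2 ^ (n - 1) + 2 ^ (n + 1 - k)) _ fun F hF ↦ exists_tuples_capturing hk hF.1 hF.2).trans_eq ?_
  rw [hcard, ← pow_add, add_comm]

lemma two_rpow_mul_one_add_two_rpow (hn : 1 ≤ n) (hkn : k ≤ n + 1) :
    (2 : ℝ) ^ ((n : ℝ) - 1) * (1 + (2 : ℝ) ^ ((2 : ℝ) - (k : ℝ))) =
      2 ^ (n - 1) + 2 ^ (n + 1 - k) := by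
  have hsub : (n : ℝ) - 1 = (n - 1 : ℕ) := by push_cast [hn]; ring
  have hsub' : (n : ℝ) - 1 + (2 - k) = (n + 1 - k : ℕ) := by push_cast [hkn]; ring
  rw [mul_add, mul_one, ← Real.rpow_add two_pos, hsub', hsub, Real.rpow_natCast, Real.rpow_natCast]

end Counting

theorem stmt_11_general (n k : ℕ) (hk : k ≠ 0) :
    (Set.ncard {F : (Fin n → Bool) → Option Bool |
        DependsOnBits {x | F x ≠ none} (fun x => (F x).getD false) k ∧
        ComputedExactly1 {x | F x ≠ none} (fun x => (F x).getD false)} : ℝ)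
      ≤ 2 ^ ((2 : ℝ) ^ ((n : ℝ) - 1) * (1 + (2 : ℝ) ^ ((2 : ℝ) - (k : ℝ)))
              + 2 * (n : ℝ) ^ 2) := by
  by_cases hkn : k ≤ n
  · rw [two_rpow_mul_one_add_two_rpow (by omega) (by omega)]
    exact_mod_cast ncard_dependsOnBits_computedExactly1_le (n := n) hk
  · have hnone (D : Set (Fin n → Bool)) (f : (Fin n → Bool) → Bool) : ¬DependsOnBits D f k :=
      fun h ↦ hkn h.le_length
    simp only [hnone, false_and, Set.ofPred_false, Set.ncard_empty, Nat.cast_zero]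
    positivity

/-- Partial Boolean functions are identified with maps
`F : {0,1}^n → {0,1,*}` (with `*` encoded as `none`). -/
theorem stmt_11 (n k : ℕ) (hn : 3 ≤ n) (hk2 : 2 ≤ k) (hkn : k ≤ n) :
    (Set.ncard {F : (Fin n → Bool) → Option Bool |
        DependsOnBits {x | F x ≠ none} (fun x => (F x).getD false) k ∧
        ComputedExactly1 {x | F x ≠ none} (fun x => (F x).getD false)} : ℝ)
      ≤ (n : ℝ) ^ 2 *
        2 ^ ((2 : ℝ) ^ ((n : ℝ) - 1) * (1 + (2 : ℝ) ^ ((2 : ℝ) - (k : ℝ)))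
              + 2 * (n : ℝ) ^ 2) := by
  have hn1 : (1 : ℝ) ≤ (n : ℝ) ^ 2 := by exact_mod_cast Nat.one_le_pow 2 n (by omega)
  exact (stmt_11_general n k (by omega)).trans (le_mul_of_one_le_left (by positivity) hn1)
end
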